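/- (Secrecy of NA in Needham–Schroeder–Lowe.) If evs ∈ nsl, A ∉ bad, B ∉ bad and Says A B (Crypt (pubK B) ⟨Nonce NA, Agent A⟩) ∈ set evs, then Nonce NA ∉ analz (spies evs), i.e. the spy cannot obtain the nonce NA. -/

import Mathlib

inductive agent : Type
  | Server : agent
  | Friend : ℕ → agent
  | Spy : agent
deriving DecidableEq

inductive msg : Type
  | Agent : agent → msg
  | Number : ℕ → msg
  | Nonce : ℕ → msg
  | Key : ℕ → msg
  | Hash : msg → msg
  | MPair : msg → msg → msg
  | Crypt : ℕ → msg → msg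
deriving DecidableEq

inductive partsP (H : Set msg) : msg → Prop
  | Inj : ∀ X, X ∈ H → partsP H X
  | Fst : ∀ X Y, partsP H (msg.MPair X Y) → partsP H X
  | Snd : ∀ X Y, partsP H (msg.MPair X Y) → partsP H Y
  | Body : ∀ K X, partsP H (msg.Crypt K X) → partsP H X

/-- `parts H`: sub-components of messages of `H`. -/
def parts (H : Set msg) : Set msg := {X | partsP H X}

inductive analzP (invKey : ℕ → ℕ) (H : Set msg) : msg → Prop
  | Inj : ∀ X, X ∈ H → analzP invKey H X
  | Fst : ∀ X Y, analzP invKey H (msg.MPair X Y) → analzP invKey H X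
  | Snd : ∀ X Y, analzP invKey H (msg.MPair X Y) → analzP invKey H Y
  | Decrypt : ∀ K X, analzP invKey H (msg.Crypt K X) →
      analzP invKey H (msg.Key (invKey K)) → analzP invKey H X

/-- `analz invKey H`: what can be obtained by decomposing and decrypting messages of `H`. -/
def analz (invKey : ℕ → ℕ) (H : Set msg) : Set msg := {X | analzP invKey H X}

inductive synthP (H : Set msg) : msg → Prop
  | Inj : ∀ X, X ∈ H → synthP H X
  | Ag : ∀ a, synthP H (msg.Agent a)
  | Num : ∀ n, synthP H (msg.Number n)
  | Hsh : ∀ X, synthP H X → synthP H (msg.Hash X)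
  | Pr : ∀ X Y, synthP H X → synthP H Y → synthP H (msg.MPair X Y)
  | Cry : ∀ K X, synthP H X → msg.Key K ∈ H → synthP H (msg.Crypt K X)

/-- `synth H`: messages that can be synthesized from `H`. -/
def synth (H : Set msg) : Set msg := {X | synthP H X}

inductive guardP (invKey : ℕ → ℕ) (n : ℕ) (Ks : Set ℕ) : msg → Prop
  | No_Nonce : ∀ X, msg.Nonce n ∉ parts {X} → guardP invKey n Ks X
  | Guard : ∀ K X, invKey K ∈ Ks → guardP invKey n Ks (msg.Crypt K X)
  | Cry : ∀ K X, guardP invKey n Ks X → guardP invKey n Ks (msg.Crypt K X)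
  | Pr : ∀ X Y, guardP invKey n Ks X → guardP invKey n Ks Y →
      guardP invKey n Ks (msg.MPair X Y)

/-- `guard n Ks`: messages in which `Nonce n` is guarded by the keys of `Ks`. -/
def guardMsg (invKey : ℕ → ℕ) (n : ℕ) (Ks : Set ℕ) : Set msg := {X | guardP invKey n Ks X}

/-- `Guard n Ks H`: every message of `H` lies in `guard n Ks`. -/
def Guard (invKey : ℕ → ℕ) (n : ℕ) (Ks : Set ℕ) (H : Set msg) : Prop :=
  ∀ X ∈ H, X ∈ guardMsg invKey n Ks
inductive event : Type
  | Says : agent → agent → msg → event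
deriving DecidableEq

def msgOf : event → msg
  | event.Says _ _ X => X

/-- Set of messages sent in a trace. -/
def sent (evs : List event) : Set msg :=
  {X | ∃ A B, event.Says A B X ∈ evs}
/-- Private key of an agent: the inverse of its public key. -/
def priK (invKey : ℕ → ℕ) (pubK : agent → ℕ) (A : agent) : ℕ := invKey (pubK A)

/-- Initial knowledge of each agent in a public-key infrastructure:
every agent knows its own private key and all public keys; the spy moreover
knows the private keys of the bad agents. -/
def initStatePK (invKey : ℕ → ℕ) (pubK : agent → ℕ) (bad : Set agent) : agent → Set msg :=
  fun A =>
    match A with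
    | agent.Spy =>
        {X | ∃ B ∈ bad, X = msg.Key (priK invKey pubK B)} ∪ {X | ∃ B, X = msg.Key (pubK B)}
    | _ => {msg.Key (priK invKey pubK A)} ∪ {X | ∃ B, X = msg.Key (pubK B)}

/-- `spies evs`: the private keys of the bad agents, all public keys, and
every message sent in `evs`. -/
def spiesPK (invKey : ℕ → ℕ) (pubK : agent → ℕ) (bad : Set agent) (evs : List event) :
    Set msg :=
  initStatePK invKey pubK bad agent.Spy ∪ sent evs

/-- `used evs`: parts of all agents' initial knowledge and of all messages sent in `evs`. -/
def usedPK (invKey : ℕ → ℕ) (pubK : agent → ℕ) (bad : Set agent) (evs : List event) :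
    Set msg :=
  parts ((⋃ A, initStatePK invKey pubK bad A) ∪ sent evs)
/-- The Needham–Schroeder–Lowe protocol. -/
inductive nsl (invKey : ℕ → ℕ) (pubK : agent → ℕ) (bad : Set agent) : List event → Prop
  | Nil : nsl invKey pubK bad []
  | Fake : ∀ evs B X, nsl invKey pubK bad evs →
      X ∈ synth (analz invKey (spiesPK invKey pubK bad evs)) →
      nsl invKey pubK bad (event.Says agent.Spy B X :: evs)
  | NS1 : ∀ evs A B NA, nsl invKey pubK bad evs →
      msg.Nonce NA ∉ usedPK invKey pubK bad evs →
      nsl invKey pubK bad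
        (event.Says A B (msg.Crypt (pubK B) (msg.MPair (msg.Nonce NA) (msg.Agent A))) :: evs)
  | NS2 : ∀ evs A A' B NA NB, nsl invKey pubK bad evs →
      msg.Nonce NB ∉ usedPK invKey pubK bad evs →
      event.Says A' B (msg.Crypt (pubK B) (msg.MPair (msg.Nonce NA) (msg.Agent A))) ∈ evs →
      nsl invKey pubK bad
        (event.Says B A (msg.Crypt (pubK A)
          (msg.MPair (msg.Nonce NA) (msg.MPair (msg.Nonce NB) (msg.Agent B)))) :: evs)
  | NS3 : ∀ evs A B B' NA NB, nsl invKey pubK bad evs →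
      event.Says A B (msg.Crypt (pubK B) (msg.MPair (msg.Nonce NA) (msg.Agent A))) ∈ evs →
      event.Says B' A (msg.Crypt (pubK A)
        (msg.MPair (msg.Nonce NA) (msg.MPair (msg.Nonce NB) (msg.Agent B)))) ∈ evs →
      nsl invKey pubK bad (event.Says A B (msg.Crypt (pubK B) (msg.Nonce NB)) :: evs)

/-- Every occurrence of `Nonce n` is protected, and no good private key occurs. -/
def okMsg (invKey : ℕ → ℕ) (pubK : agent → ℕ) (bad : Set agent) (n : ℕ) (A B : agent) :
    msg → Prop
  | msg.Agent _ => True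
  | msg.Number _ => True
  | msg.Nonce m => m ≠ n
  | msg.Key k => ∀ C, C ∉ bad → k ≠ priK invKey pubK C
  | msg.Hash _ => True
  | msg.MPair X Y => okMsg invKey pubK bad n A B X ∧ okMsg invKey pubK bad n A B Y
  | msg.Crypt K X => okMsg invKey pubK bad n A B X ∨
      (K = pubK B ∧ X = msg.MPair (msg.Nonce n) (msg.Agent A)) ∨
      (∃ m, m ≠ n ∧ K = pubK A ∧
        X = msg.MPair (msg.Nonce n) (msg.MPair (msg.Nonce m) (msg.Agent B)))

theorem ok_analz (invKey : ℕ → ℕ) (pubK : agent → ℕ) (bad : Set agent) (n : ℕ) (A B : agent)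
    (hA : A ∉ bad) (hB : B ∉ bad) (H : Set msg)
    (h : ∀ X ∈ H, okMsg invKey pubK bad n A B X) :
    ∀ X ∈ analz invKey H, okMsg invKey pubK bad n A B X := by
  intro X hX
  change analzP invKey H X at hX
  induction hX with
  | Inj X hX => exact h X hX
  | Fst X Y _ ih => exact ih.1
  | Snd X Y _ ih => exact ih.2
  | Decrypt K X _ _ ih1 ih2 =>
    rcases ih1 with h1 | ⟨rfl, _⟩ | ⟨m, _, rfl, _⟩
    · exact h1
    · exact absurd rfl (ih2 B hB)
    · exact absurd rfl (ih2 A hA)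

theorem ok_synth (invKey : ℕ → ℕ) (pubK : agent → ℕ) (bad : Set agent) (n : ℕ) (A B : agent)
    (H : Set msg) (h : ∀ X ∈ H, okMsg invKey pubK bad n A B X) :
    ∀ X ∈ synth H, okMsg invKey pubK bad n A B X := by
  intro X hX
  change synthP H X at hX
  induction hX with
  | Inj X hX => exact h X hX
  | Ag a => trivial
  | Num a => trivial
  | Hsh X _ _ => trivial
  | Pr X Y _ _ h1 h2 => exact ⟨h1, h2⟩
  | Cry K X _ _ h1 => exact Or.inl h1

theorem parts_mono' (H G : Set msg) (h : H ⊆ G) : parts H ⊆ parts G := by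
  intro X hX
  change partsP H X at hX
  change partsP G X
  induction hX with
  | Inj X hX => exact .Inj X (h hX)
  | Fst X Y _ ih => exact .Fst X Y ih
  | Snd X Y _ ih => exact .Snd X Y ih
  | Body K X _ ih => exact .Body K X ih

theorem used_cons (invKey : ℕ → ℕ) (pubK : agent → ℕ) (bad : Set agent) (e : event)
    (evs : List event) : usedPK invKey pubK bad evs ⊆ usedPK invKey pubK bad (e :: evs) := by
  apply parts_mono'
  apply Set.union_subset_union_right
  rintro X ⟨C, D, h⟩
  exact ⟨C, D, List.mem_cons_of_mem _ h⟩

theorem used_of_says (invKey : ℕ → ℕ) (pubK : agent → ℕ) (bad : Set agent) (C D : agent) (X : msg)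
    (evs : List event) (h : event.Says C D X ∈ evs) : partsP
      ((⋃ A, initStatePK invKey pubK bad A) ∪ sent evs) X :=
  .Inj X (Or.inr ⟨C, D, h⟩)

theorem ok_spies (invKey : ℕ → ℕ) (pubK : agent → ℕ) (bad : Set agent) (n : ℕ) (A B : agent)
    (hpri : Function.Injective (priK invKey pubK))
    (hpubpri : ∀ A B : agent, pubK A ≠ priK invKey pubK B) (evs : List event)
    (h : ∀ C D X, event.Says C D X ∈ evs → okMsg invKey pubK bad n A B X) :
    ∀ X ∈ spiesPK invKey pubK bad evs, okMsg invKey pubK bad n A B X := by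
  rintro X ((⟨C, hC, rfl⟩ | ⟨C, rfl⟩) | ⟨C, D, hX⟩)
  · intro D hD he
    exact hD (hpri he ▸ hC)
  · intro D _
    exact hpubpri C D
  · exact h C D X hX

theorem ok_trace (invKey : ℕ → ℕ) (pubK : agent → ℕ) (bad : Set agent) (n : ℕ) (A B : agent)
    (hpub : Function.Injective pubK)
    (hpri : Function.Injective (priK invKey pubK))
    (hpubpri : ∀ A B : agent, pubK A ≠ priK invKey pubK B)
    (hspy : agent.Spy ∈ bad) (hA : A ∉ bad) (hB : B ∉ bad)
    (evs : List event) (hevs : nsl invKey pubK bad evs) :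
    (event.Says A B (msg.Crypt (pubK B) (msg.MPair (msg.Nonce n) (msg.Agent A))) ∈ evs ∨
      msg.Nonce n ∉ usedPK invKey pubK bad evs) →
    ∀ C D X, event.Says C D X ∈ evs → okMsg invKey pubK bad n A B X := by
  induction hevs with
  | Nil => intro _ C D X h; cases h
  | Fake evs B' X hevs hX ih =>
    intro h
    have ih := ih (by
      rcases h with h | h
      · rcases List.mem_cons.1 h with h | h
        · injection h with h1
          exact absurd (h1 ▸ hspy) hA
        · exact Or.inl h
      · exact Or.inr fun h' => h (used_cons _ _ _ _ _ h'))
    intro C D Y hY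
    rcases List.mem_cons.1 hY with hY | hY
    · injection hY with _ _ h3
      subst h3
      exact ok_synth _ _ _ _ _ _ _ (ok_analz _ _ _ _ _ _ hA hB _
        (ok_spies _ _ _ _ _ _ hpri hpubpri _ ih)) _ hX
    · exact ih C D Y hY
  | NS1 evs A' B' NA hevs hN ih =>
    intro h
    have ih := ih (by
      rcases h with h | h
      · rcases List.mem_cons.1 h with h | h
        · right
          simp only [event.Says.injEq, msg.Crypt.injEq, msg.MPair.injEq, msg.Nonce.injEq] at h
          rw [h.2.2.2.1]; exact hN
        · exact Or.inl h
      · exact Or.inr fun h' => h (used_cons _ _ _ _ _ h'))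
    intro C D Y hY
    rcases List.mem_cons.1 hY with hY | hY
    · injection hY with _ _ h3
      subst h3
      by_cases hn : NA = n
      · subst hn
        rcases h with h | h
        · rcases List.mem_cons.1 h with h | h
          · simp only [event.Says.injEq, msg.Crypt.injEq, msg.MPair.injEq] at h
            obtain ⟨rfl, rfl, _⟩ := h
            exact Or.inr (Or.inl ⟨rfl, rfl⟩)
          · exact absurd (.Fst _ _ (.Body _ _ (used_of_says _ _ _ _ _ _ _ h))) hN
        · exact absurd (.Fst _ _ (.Body _ _ (used_of_says _ _ _ _ _ _ _ List.mem_cons_self))) h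
      · exact Or.inl ⟨hn, trivial⟩
    · exact ih C D Y hY
  | NS2 evs A' A'' B' NA NB hevs hN hs ih =>
    intro h
    have hNB : NB ≠ n := by
      rintro rfl
      rcases h with h | h
      · rcases List.mem_cons.1 h with h | h
        · simp at h
        · exact hN (.Fst _ _ (.Body _ _ (used_of_says _ _ _ _ _ _ _ h)))
      · exact h (.Fst _ _ (.Snd _ _ (.Body _ _ (used_of_says _ _ _ _ _ _ _ List.mem_cons_self))))
    have ih := ih (by
      rcases h with h | h
      · rcases List.mem_cons.1 h with h | h
        · simp at h
        · exact Or.inl h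
      · exact Or.inr fun h' => h (used_cons _ _ _ _ _ h'))
    intro C D Y hY
    rcases List.mem_cons.1 hY with hY | hY
    · injection hY with _ _ h3
      subst h3
      rcases ih _ _ _ hs with h1 | ⟨h1, h2⟩ | ⟨m, _, _, h2⟩
      · exact Or.inl ⟨h1.1, hNB, trivial⟩
      · simp only [msg.MPair.injEq, msg.Nonce.injEq, msg.Agent.injEq] at h2
        obtain ⟨rfl, rfl⟩ := h2
        have := hpub h1
        subst this
        exact Or.inr (Or.inr ⟨NB, hNB, rfl, rfl⟩)
      · simp at h2
    · exact ih C D Y hY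
  | NS3 evs A' B' B'' NA NB hevs hs1 hs2 ih =>
    intro h
    have ih := ih (by
      rcases h with h | h
      · rcases List.mem_cons.1 h with h | h
        · simp at h
        · exact Or.inl h
      · exact Or.inr fun h' => h (used_cons _ _ _ _ _ h'))
    intro C D Y hY
    rcases List.mem_cons.1 hY with hY | hY
    · injection hY with _ _ h3
      subst h3
      rcases ih _ _ _ hs2 with h1 | ⟨_, h2⟩ | ⟨m, hm, _, h2⟩
      · exact Or.inl h1.2.1
      · simp at h2
      · simp only [msg.MPair.injEq, msg.Nonce.injEq] at h2
        obtain ⟨_, rfl, _⟩ := h2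
        exact Or.inl hm
    · exact ih C D Y hY

/-- Secrecy of `NA` in Needham–Schroeder–Lowe. -/
theorem NA_secrecy
    (invKey : ℕ → ℕ) (pubK : agent → ℕ) (bad : Set agent)
    (hinv : ∀ K, invKey (invKey K) = K)
    (hpub : Function.Injective pubK)
    (hpri : Function.Injective (priK invKey pubK))
    (hpubpri : ∀ A B : agent, pubK A ≠ priK invKey pubK B)
    (hspy : agent.Spy ∈ bad)
    (evs : List event) (A B : agent) (NA : ℕ)
    (hevs : nsl invKey pubK bad evs) (hA : A ∉ bad) (hB : B ∉ bad)
    (hsays : event.Says A B (msg.Crypt (pubK B) (msg.MPair (msg.Nonce NA) (msg.Agent A))) ∈ evs) :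
    msg.Nonce NA ∉ analz invKey (spiesPK invKey pubK bad evs) := by
  intro hc
  exact ok_analz invKey pubK bad NA A B hA hB _
    (ok_spies _ _ _ _ _ _ hpri hpubpri _
      (ok_trace invKey pubK bad NA A B hpub hpri hpubpri hspy hA hB evs hevs (Or.inl hsays)))
    _ hc rfl
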